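/- arXiv:1205.4904 — 2 statements merged into one kernel-verified Lean document; each statement's English description precedes it below -/
import Mathlib

section
/- For every multi-index $w\in\mathbb{N}^4$, every $q\in\mathbb{R}^4$, every $\Lambda>0$ and every $m\ge 0$, the partial derivatives of the Gaussian satisfy $\Big|\partial^w_q\, e^{-\frac{|q|^2+m^2}{\Lambda^2}}\Big| \;\le\; 1.087\;\Lambda^{-|w|}\,\sqrt{|w|!}\;2^{|w|/2}\; e^{-\frac{|q|^2}{2\Lambda^2}}\, e^{-\frac{m^2}{\Lambda^2}}$, where $\partial^w_q:=\prod_{\mu=1}^{4}\big(\partial/\partial q_\mu\big)^{w_\mu}$. -/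
/-- The partial derivative `∂/∂q_μ` of a function on `ℝ⁴` (Euclidean). -/
noncomputable def pderiv4 (μ : Fin 4) (f : EuclideanSpace ℝ (Fin 4) → ℝ) :
    EuclideanSpace ℝ (Fin 4) → ℝ :=
  fun q => fderiv ℝ f q (EuclideanSpace.single μ 1)

/-- The multi-index partial derivative `∂^w = ∏_μ (∂/∂q_μ)^{w_μ}` on functions on `ℝ⁴`. -/
noncomputable def mderiv4 (w : Fin 4 → ℕ) (f : EuclideanSpace ℝ (Fin 4) → ℝ) :
    EuclideanSpace ℝ (Fin 4) → ℝ :=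
  (pderiv4 3)^[w 3] <| (pderiv4 2)^[w 2] <| (pderiv4 1)^[w 1] <| (pderiv4 0)^[w 0] f

/-!
One-dimensional derivatives of the Gaussian are Hermite polynomials times the Gaussian, so after
factoring into coordinates the claim is Cramér's inequality `|He_n(x)| exp(-x²/4) ≤ C √n!`. Here it
is proved with Indritz's sharp constant `C = 1`.

The function `y = He_n(x) exp(-x²/4)` solves `y'' = -Q y` with `Q = (4n + 2 - x²) / 4`. For a weight
`p`, the Sonin function `(p''/2 + Q p) y² - p' y y' + p y'²` has derivative
`(p'''/2 + 2 Q p' + Q' p) y²`, and it is at least `K y²` with `K = p''/2 + Q p - p'² / (4p)`. With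
`p = (a - x²)^(-1/2)` and `a` determined by the root of a suitable cubic, it decreases for `0 ≤ x`,
`x² ≤ 4n - 2`. On that range `K² ≥ 1/6`, while at the origin the square of the Sonin function is at
most `n!² / 6` by an elementary estimate of `He_n(0)`; hence `y² ≤ n!`. Beyond `x² = 4n - 2` the
three-term recurrence shows that `y` itself decreases.
-/

open Polynomial Set
open scoped ContDiff

section Hermite

theorem derivative_hermite_succ (n : ℕ) :
    derivative (hermite (n + 1)) = ((n : ℤ[X]) + 1) * hermite n := by
  induction n with
  | zero => simp
  | succ n ih =>
    have second_derivative : derivative (derivative (hermite (n + 1))) =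
        ((n : ℤ[X]) + 1) * derivative (hermite n) := by
      rw [ih, derivative_mul]
      simp
    rw [hermite_succ (n + 1), derivative_sub, derivative_mul, derivative_X, second_derivative, ih]
    push_cast
    linear_combination (-(n : ℤ[X]) - 1) * hermite_succ n

theorem hermite_add_two (n : ℕ) :
    hermite (n + 2) = X * hermite (n + 1) - ((n : ℤ[X]) + 1) * hermite n := by
  rw [hermite_succ (n + 1), derivative_hermite_succ]

/-- The (unnormalised) Hermite function `He_n(x) exp(-x²/4)`, where `He_n` is the probabilists'
Hermite polynomial. Its square is `He_n²` times the Gaussian weight, so that Cramér's inequality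
is a uniform bound on it. -/
noncomputable def hermiteFun (n : ℕ) (x : ℝ) : ℝ :=
  aeval x (hermite n) * Real.exp (-(x ^ 2 / 4))

theorem hermiteFun_zero (x : ℝ) : hermiteFun 0 x = Real.exp (-(x ^ 2 / 4)) := by
  simp [hermiteFun]

theorem hermiteFun_one (x : ℝ) : hermiteFun 1 x = x * hermiteFun 0 x := by
  simp [hermiteFun]

theorem hermiteFun_add_two (n : ℕ) (x : ℝ) :
    hermiteFun (n + 2) x = x * hermiteFun (n + 1) x - (n + 1) * hermiteFun n x := by
  simp only [hermiteFun, hermite_add_two, map_sub, map_mul, map_add, map_natCast, map_one, aeval_X]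
  ring

theorem hermiteFun_neg (n : ℕ) (x : ℝ) : hermiteFun n (-x) = (-1) ^ n * hermiteFun n x := by
  induction n using Nat.twoStepInduction with
  | zero => simp [hermiteFun_zero]
  | one => simp [hermiteFun_one, hermiteFun_zero]
  | more n ih₀ ih₁ => rw [hermiteFun_add_two, hermiteFun_add_two, ih₀, ih₁]; ring

theorem hasDerivAt_hermiteFun (n : ℕ) (x : ℝ) :
    HasDerivAt (hermiteFun n) (x / 2 * hermiteFun n x - hermiteFun (n + 1) x) x := by
  have gaussian : HasDerivAt (fun x : ℝ => Real.exp (-(x ^ 2 / 4)))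
      (Real.exp (-(x ^ 2 / 4)) * -(2 * x / 4)) x := by
    simpa using (((hasDerivAt_id x).pow 2).div_const 4).neg.exp
  refine (((hermite n).hasDerivAt_aeval x).mul gaussian).congr_deriv ?_
  simp only [hermiteFun, hermite_succ, map_sub, map_mul, aeval_X]
  ring

theorem hasDerivAt_hermiteFun_succ (n : ℕ) (x : ℝ) :
    HasDerivAt (hermiteFun (n + 1))
      ((n + 1) * hermiteFun n x - x / 2 * hermiteFun (n + 1) x) x := by
  refine (hasDerivAt_hermiteFun (n + 1) x).congr_deriv ?_
  rw [hermiteFun_add_two]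
  ring

/-- The function differentiated here is `deriv (hermiteFun n)`, so this is the Hermite-Weber
equation `y'' = -((4n + 2 - x²) / 4) y`. -/
theorem hasDerivAt_deriv_hermiteFun (n : ℕ) (x : ℝ) :
    HasDerivAt (fun x => x / 2 * hermiteFun n x - hermiteFun (n + 1) x)
      (-((4 * n + 2 - x ^ 2) / 4) * hermiteFun n x) x := by
  refine ((((hasDerivAt_id x).div_const 2).mul (hasDerivAt_hermiteFun n x)).sub
    (hasDerivAt_hermiteFun_succ n x)).congr_deriv ?_
  simp only [id_eq]
  ring

theorem hermiteFun_add_two_apply_zero (n : ℕ) :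
    hermiteFun (n + 2) 0 = -((n + 1) * hermiteFun n 0) := by
  rw [hermiteFun_add_two]
  ring

theorem hermiteFun_apply_zero_eq_zero_or (n : ℕ) :
    hermiteFun n 0 = 0 ∨ hermiteFun (n + 1) 0 = 0 := by
  induction n with
  | zero => simp [hermiteFun_one]
  | succ n ih =>
    refine ih.symm.imp_right fun h => ?_
    rw [hermiteFun_add_two_apply_zero, h, mul_zero, neg_zero]

theorem hermiteFun_apply_zero_pow_four_mul_le (n : ℕ) :
    hermiteFun n 0 ^ 4 * (3 / 2 * n + 1) ≤ (n.factorial : ℝ) ^ 2 := by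
  induction n using Nat.twoStepInduction with
  | zero => simp [hermiteFun_zero]
  | one => simp [hermiteFun_one]
  | more n ih _ =>
    have ratio : ((n : ℝ) + 1) ^ 2 * (3 / 2 * n + 4) ≤ (n + 2) ^ 2 * (3 / 2 * n + 1) := by
      nlinarith [n.cast_nonneg (α := ℝ)]
    rw [hermiteFun_add_two_apply_zero, Nat.factorial_succ, Nat.factorial_succ]
    push_cast
    calc (-((n + 1) * hermiteFun n 0)) ^ 4 * (3 / 2 * (n + 2) + 1)
        = (n + 1) ^ 2 * hermiteFun n 0 ^ 4 * ((n + 1) ^ 2 * (3 / 2 * n + 4)) := by ring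
      _ ≤ (n + 1) ^ 2 * hermiteFun n 0 ^ 4 * ((n + 2) ^ 2 * (3 / 2 * n + 1)) := by gcongr
      _ = (n + 1) ^ 2 * (n + 2) ^ 2 * (hermiteFun n 0 ^ 4 * (3 / 2 * n + 1)) := by ring
      _ ≤ (n + 1) ^ 2 * (n + 2) ^ 2 * (n.factorial : ℝ) ^ 2 := by gcongr
      _ = ((n + 1 + 1) * ((n + 1) * (n.factorial : ℝ))) ^ 2 := by ring

theorem hermiteFun_succ_pos_and_mul_le (n : ℕ) {x : ℝ} (hx : 0 < x) (h : 4 * n + 2 ≤ x ^ 2) :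
    0 < hermiteFun (n + 1) x ∧
      (n + 1) * x * hermiteFun n x ≤ (2 * n + 1) * hermiteFun (n + 1) x := by
  induction n with
  | zero => simp [hermiteFun_one, hermiteFun_zero, hx, Real.exp_pos]
  | succ n ih =>
    push_cast at h ⊢
    obtain ⟨succ_pos, mul_le⟩ := ih (by linarith)
    have recurrence := hermiteFun_add_two n x
    have growth : (x ^ 2 - (2 * n + 1)) * hermiteFun (n + 1) x ≤ x * hermiteFun (n + 2) x := by
      rw [recurrence]
      linarith
    have coeff_pos : 0 < x ^ 2 - (2 * n + 1) := by linarith [n.cast_nonneg (α := ℝ)]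
    have coeff_le : (n + 2) * x ^ 2 ≤ (2 * n + 3) * (x ^ 2 - (2 * n + 1)) := by
      nlinarith [n.cast_nonneg (α := ℝ)]
    refine ⟨pos_of_mul_pos_right ((mul_pos coeff_pos succ_pos).trans_le growth) hx.le,
      le_of_mul_le_mul_left ?_ hx⟩
    calc x * ((n + 1 + 1) * x * hermiteFun (n + 1) x)
        = (n + 2) * x ^ 2 * hermiteFun (n + 1) x := by ring
      _ ≤ (2 * n + 3) * (x ^ 2 - (2 * n + 1)) * hermiteFun (n + 1) x := by gcongr
      _ = (2 * n + 3) * ((x ^ 2 - (2 * n + 1)) * hermiteFun (n + 1) x) := by ring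
      _ ≤ (2 * n + 3) * (x * hermiteFun (n + 2) x) := by gcongr
      _ = x * ((2 * (n + 1) + 1) * hermiteFun (n + 1 + 1) x) := by ring

theorem antitoneOn_hermiteFun_succ (n : ℕ) :
    AntitoneOn (hermiteFun (n + 1)) (Ici √(4 * n + 2)) := by
  refine antitoneOn_of_hasDerivWithinAt_nonpos (convex_Ici _)
    (fun x _ => (hasDerivAt_hermiteFun_succ n x).continuousAt.continuousWithinAt)
    (fun x _ => (hasDerivAt_hermiteFun_succ n x).hasDerivWithinAt) fun x hx => ?_
  have le_x : √(4 * n + 2) ≤ x := interior_subset hx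
  have x_pos : 0 < x := (Real.sqrt_pos.2 (by positivity)).trans_le le_x
  have le_sq : 4 * n + 2 ≤ x ^ 2 := (Real.sqrt_le_left x_pos.le).1 le_x
  obtain ⟨succ_pos, mul_le⟩ := hermiteFun_succ_pos_and_mul_le n x_pos le_sq
  refine nonpos_of_mul_nonpos_right ?_ x_pos
  nlinarith [mul_le_mul_of_nonneg_right le_sq succ_pos.le]

end Hermite

section Sonin

/-- The Sonin function attached to a solution `y` of `y'' = -Q y` and a weight `p`. The primed
arguments are the derivatives of the unprimed ones. -/
noncomputable def soninFun (p p' p'' Q y y' : ℝ → ℝ) (x : ℝ) : ℝ :=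
  (p'' x / 2 + Q x * p x) * y x ^ 2 - p' x * (y x * y' x) + p x * y' x ^ 2

variable {p p' p'' Q y y' : ℝ → ℝ} {x : ℝ}

/-- The weights in `soninFun` are chosen so that all terms containing `y'` cancel. -/
theorem hasDerivAt_soninFun {dp'' dQ : ℝ} (hp : HasDerivAt p (p' x) x)
    (hp' : HasDerivAt p' (p'' x) x) (hp'' : HasDerivAt p'' dp'' x) (hQ : HasDerivAt Q dQ x)
    (hy : HasDerivAt y (y' x) x) (hy' : HasDerivAt y' (-Q x * y x) x) :
    HasDerivAt (soninFun p p' p'' Q y y') ((dp'' / 2 + 2 * Q x * p' x + dQ * p x) * y x ^ 2) x := by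
  refine (((((hp''.div_const 2).add (hQ.mul hp)).mul (hy.pow 2)).sub
    (hp'.mul (hy.mul hy'))).add (hp.mul (hy'.pow 2))).congr_deriv ?_
  simp only [Pi.add_apply, Pi.mul_apply, Pi.pow_apply]
  ring

theorem mul_sq_le_soninFun (hp : 0 < p x) :
    (p'' x / 2 + Q x * p x - p' x ^ 2 / (4 * p x)) * y x ^ 2 ≤ soninFun p p' p'' Q y y' x := by
  have complete_square : soninFun p p' p'' Q y y' x -
      (p'' x / 2 + Q x * p x - p' x ^ 2 / (4 * p x)) * y x ^ 2 =
        p x * (y' x - p' x / (2 * p x) * y x) ^ 2 := by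
    unfold soninFun
    field_simp
    ring
  rw [← sub_nonneg, complete_square]
  positivity

end Sonin

section Weight

/-- The weight `(a - x²)^(-1/2)`, meaningful for `x² < a`. For the Hermite-Weber equation it is
the squared Liouville-Green amplitude of a shifted potential; the shift `a - (4n + 2)` is chosen to
make the Sonin function monotone up to `x² = 4n - 2`. -/
noncomputable def invSqrtWeight (a x : ℝ) : ℝ := (√(a - x ^ 2))⁻¹

variable {a x : ℝ}

theorem invSqrtWeight_pos (h : 0 < a - x ^ 2) : 0 < invSqrtWeight a x :=
  inv_pos.2 (Real.sqrt_pos.2 h)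

theorem invSqrtWeight_sq_mul (h : 0 < a - x ^ 2) : invSqrtWeight a x ^ 2 * (a - x ^ 2) = 1 := by
  rw [invSqrtWeight, inv_pow, Real.sq_sqrt h.le, inv_mul_cancel₀ h.ne']

theorem invSqrtWeight_sq_le {s : ℝ} (hs : 0 < s) (h : s ≤ a - x ^ 2) :
    invSqrtWeight a x ^ 2 ≤ 1 / s := by
  rw [le_div_iff₀ hs, ← invSqrtWeight_sq_mul (hs.trans_le h)]
  gcongr

theorem hasDerivAt_invSqrtWeight (h : 0 < a - x ^ 2) :
    HasDerivAt (invSqrtWeight a) (x * invSqrtWeight a x ^ 3) x := by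
  have radicand : HasDerivAt (fun x : ℝ => a - x ^ 2) (-(2 * x)) x := by
    simpa using ((hasDerivAt_id x).pow 2).const_sub a
  have sqrt_ne_zero : √(a - x ^ 2) ≠ 0 := (Real.sqrt_pos.2 h).ne'
  refine ((radicand.sqrt h.ne').inv sqrt_ne_zero).congr_deriv ?_
  unfold invSqrtWeight
  field_simp

theorem hasDerivAt_deriv_invSqrtWeight (h : 0 < a - x ^ 2) :
    HasDerivAt (fun x => x * invSqrtWeight a x ^ 3)
      (invSqrtWeight a x ^ 3 + 3 * x ^ 2 * invSqrtWeight a x ^ 5) x := by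
  refine ((hasDerivAt_id x).mul ((hasDerivAt_invSqrtWeight h).pow 3)).congr_deriv ?_
  simp only [id_eq, Pi.pow_apply]
  ring

theorem hasDerivAt_deriv_deriv_invSqrtWeight (h : 0 < a - x ^ 2) :
    HasDerivAt (fun x => invSqrtWeight a x ^ 3 + 3 * x ^ 2 * invSqrtWeight a x ^ 5)
      (9 * x * invSqrtWeight a x ^ 5 + 15 * x ^ 3 * invSqrtWeight a x ^ 7) x := by
  have weight := hasDerivAt_invSqrtWeight h
  refine ((weight.pow 3).add
    ((((hasDerivAt_id x).pow 2).const_mul 3).mul (weight.pow 5))).congr_deriv ?_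
  simp only [id_eq, Pi.pow_apply]
  ring

end Weight

section Cramer

/-- The Sonin function of `hermiteFun n` with weight `(a - x²)^(-1/2)`. -/
noncomputable def hermiteSonin (n : ℕ) (a : ℝ) : ℝ → ℝ :=
  soninFun (invSqrtWeight a) (fun x => x * invSqrtWeight a x ^ 3)
    (fun x => invSqrtWeight a x ^ 3 + 3 * x ^ 2 * invSqrtWeight a x ^ 5)
    (fun x => (4 * n + 2 - x ^ 2) / 4)
    (hermiteFun n) (fun x => x / 2 * hermiteFun n x - hermiteFun (n + 1) x)

theorem hasDerivAt_hermiteSonin (n : ℕ) {a x : ℝ} (h : 0 < a - x ^ 2) :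
    HasDerivAt (hermiteSonin n a)
      (x * invSqrtWeight a x ^ 3 * (9 / 2 * invSqrtWeight a x ^ 2
        + 15 / 2 * x ^ 2 * invSqrtWeight a x ^ 4 - (a - (4 * n + 2)) / 2) * hermiteFun n x ^ 2)
      x := by
  have potential : HasDerivAt (fun x : ℝ => (4 * n + 2 - x ^ 2) / 4) (-(2 * x) / 4) x := by
    simpa using (((hasDerivAt_id x).pow 2).const_sub (4 * (n : ℝ) + 2)).div_const 4
  refine (hasDerivAt_soninFun (hasDerivAt_invSqrtWeight h) (hasDerivAt_deriv_invSqrtWeight h)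
    (hasDerivAt_deriv_deriv_invSqrtWeight h) potential (hasDerivAt_hermiteFun n x)
    (hasDerivAt_deriv_hermiteFun n x)).congr_deriv ?_
  linear_combination
    x / 2 * invSqrtWeight a x * hermiteFun n x ^ 2 * invSqrtWeight_sq_mul h

theorem exists_cubic_eq_of_two_le {M : ℝ} (hM : 2 ≤ M) :
    ∃ s, 6 ≤ s ∧ s ^ 2 * (s - 4) = 9 * s + 15 * M := by
  have continuous : ContinuousOn (fun s : ℝ => s ^ 2 * (s - 4) - 9 * s) (Icc 6 (M + 10)) := by
    fun_prop
  obtain ⟨s, hs, cubic⟩ := intermediate_value_Icc (by linarith) continuous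
    (show 15 * M ∈ Icc _ _ from ⟨by linarith, by nlinarith⟩)
  exact ⟨s, hs.1, by linarith⟩

/-- The cubic equation makes the derivative vanish when `x² = 4n - 2`. -/
theorem antitoneOn_hermiteSonin (n : ℕ) {s b : ℝ} (hs : 0 < s)
    (cubic : s ^ 2 * (s - 4) = 9 * s + 15 * (4 * n - 2)) (hb : b ^ 2 ≤ 4 * n - 2) :
    AntitoneOn (hermiteSonin n (4 * n - 2 + s)) (Icc 0 b) := by
  have sq_le {x : ℝ} (hx : x ∈ Icc 0 b) : x ^ 2 ≤ 4 * n - 2 :=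
    (pow_le_pow_left₀ hx.1 hx.2 2).trans hb
  have s_le {x : ℝ} (hx : x ∈ Icc 0 b) : s ≤ 4 * n - 2 + s - x ^ 2 := by linarith [sq_le hx]
  have derivative {x : ℝ} (hx : x ∈ Icc 0 b) := hasDerivAt_hermiteSonin n (hs.trans_le (s_le hx))
  refine antitoneOn_of_hasDerivWithinAt_nonpos (convex_Icc 0 b)
    (fun x hx => (derivative hx).continuousAt.continuousWithinAt)
    (fun x hx => (derivative (interior_subset hx)).hasDerivWithinAt) fun x hx => ?_
  replace hx := interior_subset hx
  have weight_pos := invSqrtWeight_pos (hs.trans_le (s_le hx))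
  have weight_sq_le := invSqrtWeight_sq_le hs (s_le hx)
  set r := invSqrtWeight (4 * n - 2 + s) x
  have bracket_nonpos :
      9 / 2 * r ^ 2 + 15 / 2 * x ^ 2 * r ^ 4 - (4 * n - 2 + s - (4 * n + 2)) / 2 ≤ 0 := by
    have bracket_at_turning_point :
        9 / 2 * (1 / s) + 15 / 2 * (4 * n - 2) * (1 / s) ^ 2 = (s - 4) / 2 := by
      field_simp
      linarith
    have quartic_le : x ^ 2 * (r ^ 2) ^ 2 ≤ (4 * n - 2) * (1 / s) ^ 2 := by
      have := (sq_nonneg x).trans (sq_le hx)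
      gcongr
      exact sq_le hx
    linarith
  exact mul_nonpos_of_nonpos_of_nonneg
    (mul_nonpos_of_nonneg_of_nonpos (mul_nonneg hx.1 (by positivity)) bracket_nonpos)
    (sq_nonneg _)

theorem hermiteSonin_apply_zero (n : ℕ) (a : ℝ) :
    hermiteSonin n a 0 =
      (invSqrtWeight a 0 ^ 3 / 2 + (n + 1 / 2) * invSqrtWeight a 0) * hermiteFun n 0 ^ 2 +
        invSqrtWeight a 0 * hermiteFun (n + 1) 0 ^ 2 := by
  unfold hermiteSonin soninFun
  ring

theorem hermiteSonin_apply_zero_sq_le (n : ℕ) {a : ℝ} (ha : 4 * n + 4 ≤ a) :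
    hermiteSonin n a 0 ^ 2 ≤ 1 / 6 * (n.factorial : ℝ) ^ 2 := by
  have weight_sq_le : invSqrtWeight a 0 ^ 2 ≤ 1 / (4 * (n + 1)) :=
    invSqrtWeight_sq_le (by positivity) (by linarith)
  rw [hermiteSonin_apply_zero]
  set r := invSqrtWeight a 0
  rcases hermiteFun_apply_zero_eq_zero_or n with fun_zero | succ_zero
  · have origin := hermiteFun_apply_zero_pow_four_mul_le (n + 1)
    rw [Nat.factorial_succ] at origin
    push_cast at origin
    have coeff_le : r ^ 2 * ((n : ℝ) + 1) ^ 2 ≤ 1 / 6 * (3 / 2 * (n + 1) + 1) := by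
      calc r ^ 2 * ((n : ℝ) + 1) ^ 2 ≤ 1 / (4 * (n + 1)) * ((n : ℝ) + 1) ^ 2 := by gcongr
        _ = ((n : ℝ) + 1) / 4 := by field_simp
        _ ≤ 1 / 6 * (3 / 2 * (n + 1) + 1) := by linarith
    refine le_of_mul_le_mul_left ?_ (by positivity : (0 : ℝ) < (n + 1) ^ 2)
    rw [fun_zero]
    calc ((n : ℝ) + 1) ^ 2 *
          ((r ^ 3 / 2 + (n + 1 / 2) * r) * 0 ^ 2 + r * hermiteFun (n + 1) 0 ^ 2) ^ 2
        = r ^ 2 * (n + 1) ^ 2 * hermiteFun (n + 1) 0 ^ 4 := by ring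
      _ ≤ 1 / 6 * (3 / 2 * (n + 1) + 1) * hermiteFun (n + 1) 0 ^ 4 := by gcongr
      _ ≤ (n + 1) ^ 2 * (1 / 6 * (n.factorial : ℝ) ^ 2) := by linarith
  · have coeff_le : r ^ 2 * (r ^ 2 / 2 + (n + 1 / 2)) ^ 2 ≤ 1 / 6 * (3 / 2 * (n : ℝ) + 1) := by
      have weight_sq_le_quarter : r ^ 2 ≤ 1 / 4 :=
        weight_sq_le.trans (one_div_le_one_div_of_le (by norm_num) (by linarith))
      calc r ^ 2 * (r ^ 2 / 2 + (n + 1 / 2)) ^ 2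
          ≤ 1 / (4 * (n + 1)) * (1 / 4 / 2 + ((n : ℝ) + 1 / 2)) ^ 2 := by gcongr
        _ ≤ 1 / 6 * (3 / 2 * (n : ℝ) + 1) := by
          rw [one_div_mul_eq_div, div_le_iff₀ (by positivity)]
          nlinarith
    rw [succ_zero]
    calc ((r ^ 3 / 2 + (n + 1 / 2) * r) * hermiteFun n 0 ^ 2 + r * 0 ^ 2) ^ 2
        = r ^ 2 * (r ^ 2 / 2 + (n + 1 / 2)) ^ 2 * hermiteFun n 0 ^ 4 := by ring
      _ ≤ 1 / 6 * (3 / 2 * n + 1) * hermiteFun n 0 ^ 4 := by gcongr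
      _ ≤ 1 / 6 * (n.factorial : ℝ) ^ 2 := by
        linarith [hermiteFun_apply_zero_pow_four_mul_le n]

theorem pow_five_le_six_mul_sq {s q : ℝ} (hs : 6 ≤ s) (hq : s ≤ q) :
    q ^ 5 ≤ 6 * (q ^ 2 * (q - s + 4) / 4 - 3 / 4 * q + (s ^ 3 - 4 * s ^ 2 + 6 * s) / 12) ^ 2 := by
  -- As a polynomial in `u = s - 6` and `t = q - s`, the difference has nonnegative coefficients.
  obtain ⟨u, rfl⟩ := exists_add_of_le hs
  obtain ⟨t, rfl⟩ := exists_add_of_le hq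
  have hu : 0 ≤ u := by linarith
  have ht : 0 ≤ t := by linarith
  rw [← sub_nonneg]
  ring_nf
  positivity

theorem one_sixth_le_soninCoeff_sq (n : ℕ) {s x : ℝ} (hs : 6 ≤ s)
    (cubic : s ^ 2 * (s - 4) = 9 * s + 15 * (4 * n - 2)) (hx : x ^ 2 ≤ 4 * n - 2) {r : ℝ}
    (hr : r ^ 2 * (4 * n - 2 + s - x ^ 2) = 1) :
    1 / 6 ≤ (r ^ 3 / 2 + 5 / 4 * x ^ 2 * r ^ 5 + (4 * n + 2 - x ^ 2) / 4 * r) ^ 2 := by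
  obtain ⟨q, q_eq⟩ : ∃ q, q = 4 * n - 2 + s - x ^ 2 := ⟨_, rfl⟩
  have poly := pow_five_le_six_mul_sq hs (q := q) (by linarith)
  set B := q ^ 2 * (q - s + 4) / 4 - 3 / 4 * q + (s ^ 3 - 4 * s ^ 2 + 6 * s) / 12 with hB
  rw [← q_eq] at hr
  have factored :
      r ^ 3 / 2 + 5 / 4 * x ^ 2 * r ^ 5 + (4 * n + 2 - x ^ 2) / 4 * r = r ^ 5 * B := by
    have sq_eq : x ^ 2 = 4 * n - 2 + s - q := by linarith
    rw [sq_eq, hB]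
    linear_combination
      (-(r ^ 3 / 2) - (q - s + 4) / 4 * r * (1 + r ^ 2 * q)) * hr - r ^ 5 / 12 * cubic
  have pow_ten : r ^ 10 * q ^ 5 = 1 := by
    rw [← one_pow 5, ← hr]
    ring
  rw [factored]
  calc 1 / 6 = r ^ 10 * q ^ 5 / 6 := by rw [pow_ten]
    _ ≤ r ^ 10 * (6 * B ^ 2) / 6 := by gcongr
    _ = (r ^ 5 * B) ^ 2 := by ring

theorem hermiteFun_sq_le_factorial_of_sq_le (n : ℕ) {x : ℝ} (hx : 0 ≤ x)
    (hx2 : x ^ 2 ≤ 4 * n - 2) : hermiteFun n x ^ 2 ≤ n.factorial := by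
  have one_le : (1 : ℝ) ≤ n := by
    have : (0 : ℝ) < n := by linarith [sq_nonneg x]
    exact_mod_cast this
  obtain ⟨s, hs, cubic⟩ := exists_cubic_eq_of_two_le (M := 4 * n - 2) (by linarith)
  set a := 4 * n - 2 + s with ha
  have sonin_le : hermiteSonin n a x ≤ hermiteSonin n a 0 :=
    antitoneOn_hermiteSonin n (by linarith) cubic hx2 ⟨le_rfl, hx⟩ ⟨hx, le_rfl⟩ hx
  have radicand_pos : 0 < a - x ^ 2 := by linarith [ha]
  have weight_pos := invSqrtWeight_pos radicand_pos
  have coeff_sq := one_sixth_le_soninCoeff_sq n hs cubic hx2 (invSqrtWeight_sq_mul radicand_pos)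
  set r := invSqrtWeight a x with hr
  set K := r ^ 3 / 2 + 5 / 4 * x ^ 2 * r ^ 5 + (4 * n + 2 - x ^ 2) / 4 * r with hK
  have le_sonin : K * hermiteFun n x ^ 2 ≤ hermiteSonin n a x := by
    refine le_trans (le_of_eq ?_) (mul_sq_le_soninFun weight_pos)
    rw [← hr, hK]
    field_simp
    ring
  have K_nonneg : 0 ≤ K := by
    have : 0 ≤ 4 * n + 2 - x ^ 2 := by linarith
    positivity
  refine (pow_le_pow_iff_left₀ (sq_nonneg _) (by positivity) two_ne_zero).1 ?_
  have scaled : (K * hermiteFun n x ^ 2) ^ 2 ≤ 1 / 6 * (n.factorial : ℝ) ^ 2 :=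
    (pow_le_pow_left₀ (by positivity) (le_sonin.trans sonin_le) 2).trans
      (hermiteSonin_apply_zero_sq_le n (by linarith))
  rw [mul_pow] at scaled
  linarith [mul_le_mul_of_nonneg_right coeff_sq (sq_nonneg (hermiteFun n x ^ 2))]

theorem hermiteFun_sq_le_factorial_of_nonneg (n : ℕ) {x : ℝ} (hx : 0 ≤ x) :
    hermiteFun n x ^ 2 ≤ n.factorial := by
  cases n with
  | zero =>
    rw [hermiteFun_zero, Nat.factorial_zero, Nat.cast_one, sq_le_one_iff₀ (Real.exp_pos _).le,
      Real.exp_le_one_iff]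
    linarith [sq_nonneg x]
  | succ n =>
    rcases le_total x √(4 * n + 2) with le_turning | turning_le
    · refine hermiteFun_sq_le_factorial_of_sq_le _ hx ?_
      push_cast
      linarith [(Real.le_sqrt hx (by positivity)).1 le_turning]
    · have turning_pos : 0 < √(4 * (n : ℝ) + 2) := Real.sqrt_pos.2 (by positivity)
      have le_sq : 4 * n + 2 ≤ x ^ 2 := (Real.sqrt_le_left hx).1 turning_le
      have pos := (hermiteFun_succ_pos_and_mul_le n (turning_pos.trans_le turning_le) le_sq).1
      calc hermiteFun (n + 1) x ^ 2 ≤ hermiteFun (n + 1) √(4 * n + 2) ^ 2 := by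
            gcongr
            exact antitoneOn_hermiteFun_succ n self_mem_Ici turning_le turning_le
        _ ≤ ((n + 1).factorial : ℝ) := by
            refine hermiteFun_sq_le_factorial_of_sq_le _ turning_pos.le ?_
            rw [Real.sq_sqrt (by positivity)]
            push_cast
            linarith

theorem abs_hermiteFun_le_sqrt_factorial (n : ℕ) (x : ℝ) :
    |hermiteFun n x| ≤ √(n.factorial : ℝ) := by
  wlog hx : 0 ≤ x generalizing x
  · simpa [hermiteFun_neg, abs_mul] using this (-x) (by linarith)
  exact Real.abs_le_sqrt (hermiteFun_sq_le_factorial_of_nonneg n hx)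

end Cramer

theorem abs_iterate_deriv_gaussian_le {Λ : ℝ} (hΛ : 0 < Λ) (n : ℕ) (t : ℝ) :
    |deriv^[n] (fun t => Real.exp (-t ^ 2 / Λ ^ 2)) t| ≤
      (Λ ^ n)⁻¹ * √(n.factorial : ℝ) * √2 ^ n * Real.exp (-t ^ 2 / (2 * Λ ^ 2)) := by
  have rescale : (fun t : ℝ => Real.exp (-t ^ 2 / Λ ^ 2)) =
      fun t => Real.exp (-((√2 / Λ * t) ^ 2 / 2)) := by
    funext t
    rw [mul_pow, div_pow, Real.sq_sqrt zero_le_two]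
    ring_nf
  have smooth : ContDiff ℝ n fun y : ℝ => Real.exp (-(y ^ 2 / 2)) := by fun_prop
  rw [rescale, ← iteratedDeriv_eq_iterate, iteratedDeriv_comp_const_mul smooth,
    iteratedDeriv_eq_iterate]
  simp only [deriv_gaussian_eq_hermite_mul_gaussian]
  set s := √2 / Λ * t with hs
  have split_exp : Real.exp (-(s ^ 2 / 2)) = Real.exp (-(s ^ 2 / 4)) * Real.exp (-(s ^ 2 / 4)) := by
    rw [← Real.exp_add]
    ring_nf
  have exponent : -(s ^ 2 / 4) = -t ^ 2 / (2 * Λ ^ 2) := by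
    rw [hs, mul_pow, div_pow, Real.sq_sqrt zero_le_two]
    ring
  calc |(√2 / Λ) ^ n * ((-1) ^ n * aeval s (hermite n) * Real.exp (-(s ^ 2 / 2)))|
      = (√2 / Λ) ^ n * (|hermiteFun n s| * Real.exp (-(s ^ 2 / 4))) := by
        rw [split_exp, hermiteFun]
        simp only [abs_mul, abs_pow, abs_neg, abs_one, one_pow, Real.abs_exp,
          abs_of_pos (div_pos (Real.sqrt_pos.2 zero_lt_two) hΛ)]
        ring
    _ ≤ (√2 / Λ) ^ n * (√(n.factorial : ℝ) * Real.exp (-(s ^ 2 / 4))) := by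
        gcongr
        exact abs_hermiteFun_le_sqrt_factorial n s
    _ = (Λ ^ n)⁻¹ * √(n.factorial : ℝ) * √2 ^ n * Real.exp (-t ^ 2 / (2 * Λ ^ 2)) := by
        rw [exponent, div_pow]
        ring

section PartialDeriv

variable {ι : Type*} [Fintype ι] [DecidableEq ι]

/-- The partial derivative `∂/∂x_i` of a function on the Euclidean space `ℝ^ι`. -/
noncomputable def partialDeriv (i : ι) (f : EuclideanSpace ℝ ι → ℝ) : EuclideanSpace ℝ ι → ℝ :=
  fun x => fderiv ℝ f x (EuclideanSpace.single i 1)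

/-- The multi-index derivative `∏_i (∂/∂x_i)^{w_i}` on functions on `ℝᵈ`; the derivatives in
coordinates of smaller index are taken first. -/
noncomputable def multiDeriv {d : ℕ} (w : Fin d → ℕ) (f : EuclideanSpace ℝ (Fin d) → ℝ) :
    EuclideanSpace ℝ (Fin d) → ℝ :=
  (List.finRange d).foldl (fun g i => (partialDeriv i)^[w i] g) f

theorem partialDeriv_const_mul_prod {f : ι → ℝ → ℝ} (hf : ∀ j, Differentiable ℝ (f j)) (c : ℝ)
    (i : ι) :
    partialDeriv i (fun x => c * ∏ j, f j (x j)) =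
      fun x => c * ∏ j, Function.update f i (deriv (f i)) j (x j) := by
  funext x
  have factor (j : ι) : HasFDerivAt (fun x : EuclideanSpace ℝ ι => f j (x j))
      (deriv (f j) (x j) • (EuclideanSpace.proj j : EuclideanSpace ℝ ι →L[ℝ] ℝ)) x :=
    (hf j (x j)).hasDerivAt.comp_hasFDerivAt x
      (EuclideanSpace.proj j : EuclideanSpace ℝ ι →L[ℝ] ℝ).hasFDerivAt
  have product := (HasFDerivAt.finsetProd (u := Finset.univ) fun j _ => factor j).const_mul c
  have others : ∏ j ∈ Finset.univ.erase i, Function.update f i (deriv (f i)) j (x j) =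
      ∏ j ∈ Finset.univ.erase i, f j (x j) :=
    Finset.prod_congr rfl fun j hj => by rw [Function.update_of_ne (Finset.ne_of_mem_erase hj)]
  rw [partialDeriv, product.fderiv, ← Finset.prod_erase_mul _ _ (Finset.mem_univ i), others]
  simp

theorem iterate_partialDeriv_const_mul_prod {f : ι → ℝ → ℝ} (hf : ∀ j, ContDiff ℝ ∞ (f j)) (c : ℝ)
    (i : ι) (n : ℕ) :
    (partialDeriv i)^[n] (fun x => c * ∏ j, f j (x j)) =
      fun x => c * ∏ j, Function.update f i (deriv^[n] (f i)) j (x j) := by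
  induction n with
  | zero => simp
  | succ n ih =>
    have differentiable (j : ι) : Differentiable ℝ (Function.update f i (deriv^[n] (f i)) j) :=
      (Function.forall_update_iff f (fun _ g => Differentiable ℝ g)).2
        ⟨(ContDiff.iterate_deriv n (hf i)).differentiable (by simp),
          fun j _ => (hf j).differentiable (by simp)⟩ j
    rw [Function.iterate_succ_apply', ih, partialDeriv_const_mul_prod differentiable,
      Function.update_self, Function.update_idem, ← Function.iterate_succ_apply' deriv]

theorem foldl_iterate_partialDeriv_const_mul_prod {f : ι → ℝ → ℝ}
    (hf : ∀ j, ContDiff ℝ ∞ (f j)) (c : ℝ) (w : ι → ℕ) (l : List ι) :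
    l.foldl (fun g i => (partialDeriv i)^[w i] g) (fun x => c * ∏ j, f j (x j)) =
      fun x => c * ∏ j, deriv^[l.count j * w j] (f j) (x j) := by
  induction l generalizing f with
  | nil => simp
  | cons i l ih =>
    have smooth : ∀ j, ContDiff ℝ ∞ (Function.update f i (deriv^[w i] (f i)) j) :=
      (Function.forall_update_iff f (fun _ g => ContDiff ℝ ∞ g)).2
        ⟨ContDiff.iterate_deriv (w i) (hf i), fun j _ => hf j⟩
    rw [List.foldl_cons, iterate_partialDeriv_const_mul_prod hf, ih smooth]
    funext x
    refine congrArg (c * ·) (Finset.prod_congr rfl fun j _ => ?_)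
    by_cases h : j = i
    · subst h
      rw [Function.update_self, List.count_cons_self, add_one_mul, Function.iterate_add_apply]
    · rw [Function.update_of_ne h, List.count_cons_of_ne (Ne.symm h)]

theorem multiDeriv_const_mul_prod {d : ℕ} (w : Fin d → ℕ) {f : Fin d → ℝ → ℝ}
    (hf : ∀ j, ContDiff ℝ ∞ (f j)) (c : ℝ) :
    multiDeriv w (fun x => c * ∏ j, f j (x j)) = fun x => c * ∏ j, deriv^[w j] (f j) (x j) := by
  have count_eq_one (j : Fin d) : (List.finRange d).count j = 1 :=
    List.count_eq_one_of_mem (List.nodup_finRange d) (List.mem_finRange j)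
  simp only [multiDeriv, foldl_iterate_partialDeriv_const_mul_prod hf, count_eq_one, one_mul]

end PartialDeriv

theorem exp_neg_norm_sq_div_eq_prod {ι : Type*} [Fintype ι] (x : EuclideanSpace ℝ ι) (b : ℝ) :
    Real.exp (-‖x‖ ^ 2 / b) = ∏ i, Real.exp (-x i ^ 2 / b) := by
  rw [← Real.exp_sum, ← Finset.sum_div, Finset.sum_neg_distrib, EuclideanSpace.real_norm_sq_eq]

theorem stmt_6_general {d : ℕ} (w : Fin d → ℕ) (q : EuclideanSpace ℝ (Fin d)) {Λ : ℝ} (m : ℝ)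
    (hΛ : 0 < Λ) :
    |multiDeriv w (fun x => Real.exp (-(‖x‖ ^ 2 + m ^ 2) / Λ ^ 2)) q| ≤
      Λ ^ (-(∑ μ, w μ : ℤ)) * Real.sqrt (∏ μ, Nat.factorial (w μ)) *
        Real.sqrt 2 ^ (∑ μ, w μ) * Real.exp (-‖q‖ ^ 2 / (2 * Λ ^ 2)) *
        Real.exp (-m ^ 2 / Λ ^ 2) := by
  have factorization : (fun x : EuclideanSpace ℝ (Fin d) => Real.exp (-(‖x‖ ^ 2 + m ^ 2) / Λ ^ 2)) =
      fun x => Real.exp (-m ^ 2 / Λ ^ 2) * ∏ i, Real.exp (-x i ^ 2 / Λ ^ 2) := by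
    funext x
    rw [← exp_neg_norm_sq_div_eq_prod, ← Real.exp_add]
    ring_nf
  have zpow_eq_prod : Λ ^ (-(∑ μ, w μ : ℤ)) = ∏ μ, (Λ ^ w μ)⁻¹ := by
    rw [Finset.prod_inv_distrib, Finset.prod_pow_eq_pow_sum, zpow_neg, ← Nat.cast_sum,
      zpow_natCast]
  rw [factorization, multiDeriv_const_mul_prod w
    (f := fun _ t => Real.exp (-t ^ 2 / Λ ^ 2)) (fun _ => by fun_prop), abs_mul, Real.abs_exp,
    Finset.abs_prod, mul_comm, zpow_eq_prod, Real.sqrt_prod _ fun _ _ => Nat.cast_nonneg _,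
    ← Finset.prod_pow_eq_pow_sum, exp_neg_norm_sq_div_eq_prod]
  simp only [← Finset.prod_mul_distrib]
  gcongr with μ
  exact abs_iterate_deriv_gaussian_le hΛ (w μ) (q μ)

/-- Bound on the multi-index derivatives of the Gaussian:
`|∂^w e^{-(|q|²+m²)/Λ²}| ≤ 1.087 Λ^{-|w|} √(w!) 2^{|w|/2} e^{-|q|²/(2Λ²)} e^{-m²/Λ²}`. -/
theorem stmt_6 (w : Fin 4 → ℕ) (q : EuclideanSpace ℝ (Fin 4)) (Λ m : ℝ)
    (hΛ : 0 < Λ) (hm : 0 ≤ m) :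
    |mderiv4 w (fun x => Real.exp (-(‖x‖ ^ 2 + m ^ 2) / Λ ^ 2)) q| ≤
      1.087 * Λ ^ (-(∑ μ, w μ : ℤ)) * Real.sqrt (∏ μ, Nat.factorial (w μ)) *
        Real.sqrt 2 ^ (∑ μ, w μ) * Real.exp (-‖q‖ ^ 2 / (2 * Λ ^ 2)) *
        Real.exp (-m ^ 2 / Λ ^ 2) := by
  refine (stmt_6_general w q m hΛ).trans ?_
  gcongr
  exact le_mul_of_one_le_left (by positivity) (by norm_num)
end

section
/- Let $d,L\in\mathbb{N}$, $\Lambda>0$, $m>0$, $P\ge 0$, and set $\kappa:=\max(\Lambda,m)$. Then $\sum_{\mu=0}^{d}\frac{1}{\sqrt{\mu!}}\int_{\mathbb{R}^4}\frac{d^4k}{(2\pi)^4\,\Lambda^4}\; e^{-\frac{|k|^2}{2\Lambda^2}}\,\Big(\frac{P+|k|}{\Lambda}\Big)^{\mu}\,\sum_{\lambda=0}^{L}\frac{\log^{\lambda}\big(\max(\tfrac{P+|k|}{\kappa},\tfrac{\kappa}{m})\big)}{2^{\lambda}\lambda!} \;\le\; 2^{d}\,\sum_{\mu=0}^{d}\frac{1}{\sqrt{\mu!}}\Big(\frac{P}{\Lambda}\Big)^{\mu}\,\sum_{\lambda=0}^{L}\frac{\log^{\lambda}\big(\max(\tfrac{P}{\kappa},\tfrac{\kappa}{m})\big)+\sqrt{\lambda!}}{2^{\lambda}\lambda!}$.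 -/
/-!
Write `x = |k| / Λ`. Then `(P + |k|) / Λ = P / Λ + x`, and the logarithm grows by at most `x`.
Binomial expansion, together with `x ^ n / √n! ≤ √2 ^ n * exp (x ^ 2 / 4)` and `n.choose j ≤ 2 ^ n`,
separates `P` from `x` at the cost of `2 ^ μ * exp (x ^ 2 / 4)` in the polynomial factor and of
`exp (x / 2)` in the logarithmic one. Since `x / 2 ≤ 1 + x ^ 2 / 16`, the Gaussian still leaves
`exp (1 - 3 / 16 * x ^ 2)`, whose normalised integral is `exp 1 * (4 / (3 * π)) ^ (D / 2)` in
dimension `D`. For `D ≥ 4` this is at most `1 / 2`, which absorbs the excess of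
`∑ μ ≤ d, 2 ^ μ` over `2 ^ d`.
-/

open Finset MeasureTheory Real
open Module (finrank)
open scoped Nat

section TruncatedSeries

/-- The exponential series truncated to its first `n` terms. With `t` half a logarithm it is the
sum over `λ` in the momentum integral. -/
noncomputable def expSum (n : ℕ) (t : ℝ) : ℝ := ∑ l ∈ range n, t ^ l / l !

/-- The truncated exponential-type series with `√j!` in place of `j!`, in which the polynomial
weights of the momentum integral are summed. -/
noncomputable def sqrtExpSum (n : ℕ) (t : ℝ) : ℝ := ∑ j ∈ range n, t ^ j / √(j ! : ℝ)

theorem expSum_nonneg (n : ℕ) {t : ℝ} (ht : 0 ≤ t) : 0 ≤ expSum n t :=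
  sum_nonneg fun _ _ ↦ by positivity

theorem sqrtExpSum_nonneg (n : ℕ) {t : ℝ} (ht : 0 ≤ t) : 0 ≤ sqrtExpSum n t :=
  sum_nonneg fun _ _ ↦ by positivity

theorem expSum_le_expSum (n : ℕ) {s t : ℝ} (hs : 0 ≤ s) (hst : s ≤ t) :
    expSum n s ≤ expSum n t :=
  sum_le_sum fun _ _ ↦ by gcongr

theorem sqrtExpSum_mono {t : ℝ} (ht : 0 ≤ t) : Monotone fun n ↦ sqrtExpSum n t :=
  fun _ _ h ↦ sum_le_sum_of_subset_of_nonneg (range_subset_range.mpr h)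
    fun _ _ _ ↦ by positivity

theorem expSum_div_two (n : ℕ) (t : ℝ) :
    expSum n (t / 2) = ∑ l ∈ range n, t ^ l / (2 ^ l * (l ! : ℝ)) := by
  simp only [expSum, div_pow, div_div]

theorem add_pow_div_factorial (u v : ℝ) (n : ℕ) :
    (u + v) ^ n / n ! = ∑ k ∈ range (n + 1), u ^ k / k ! * (v ^ (n - k) / (n - k)!) := by
  rw [add_pow, sum_div]
  refine sum_congr rfl fun k hk ↦ ?_
  rw [Nat.cast_choose ℝ (mem_range_succ_iff.mp hk)]
  field_simp

theorem expSum_add_le (n : ℕ) {u v : ℝ} (hu : 0 ≤ u) (hv : 0 ≤ v) :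
    expSum n (u + v) ≤ expSum n u * exp v :=
  calc expSum n (u + v)
      = ∑ k ∈ range n, ∑ j ∈ range (n - k), u ^ k / k ! * (v ^ j / j !) := by
        simp only [expSum, add_pow_div_factorial]
        exact sum_range_diag_flip n fun k j ↦ u ^ k / k ! * (v ^ j / j !)
    _ = ∑ k ∈ range n, u ^ k / k ! * ∑ j ∈ range (n - k), v ^ j / j ! := by
        simp only [mul_sum]
    _ ≤ ∑ k ∈ range n, u ^ k / k ! * exp v := by
        gcongr
        exact sum_le_exp_of_nonneg hv _
    _ = expSum n u * exp v := (sum_mul ..).symm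

theorem pow_div_sqrt_factorial_le {c : ℝ} (hc : 0 < c) (x : ℝ) (n : ℕ) :
    x ^ n / √(n ! : ℝ) ≤ √c ^ n * exp (x ^ 2 / (2 * c)) := by
  refine le_of_abs_le (abs_le_of_sq_le_sq ?_ (by positivity))
  calc (x ^ n / √(n ! : ℝ)) ^ 2 = c ^ n * ((x ^ 2 / c) ^ n / n !) := by
        rw [div_pow, sq_sqrt (by positivity), div_pow, pow_right_comm]
        field_simp
    _ ≤ c ^ n * exp (x ^ 2 / c) := by
        gcongr
        exact pow_div_factorial_le_exp _ (by positivity) n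
    _ = (√c ^ n * exp (x ^ 2 / (2 * c))) ^ 2 := by
        rw [mul_pow, pow_right_comm, sq_sqrt hc.le, ← exp_nat_mul]
        congr 2
        push_cast
        field_simp

theorem add_pow_div_sqrt_factorial (u v : ℝ) (n : ℕ) :
    (u + v) ^ n / √(n ! : ℝ) =
      ∑ j ∈ range (n + 1),
        √(n.choose j : ℝ) * (u ^ j / √(j ! : ℝ)) * (v ^ (n - j) / √((n - j)! : ℝ)) := by
  rw [add_pow, sum_div]
  refine sum_congr rfl fun j hj ↦ ?_
  have sqrt_factorial : √(n ! : ℝ) = √(n.choose j : ℝ) * √(j ! : ℝ) * √((n - j)! : ℝ) := by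
    rw [← sqrt_mul (by positivity), ← sqrt_mul (by positivity)]
    exact_mod_cast congrArg (fun i : ℕ ↦ √(i : ℝ))
      (Nat.choose_mul_factorial_mul_factorial (mem_range_succ_iff.mp hj)).symm
  have choose_pos : (0 : ℝ) < n.choose j := mod_cast Nat.choose_pos (mem_range_succ_iff.mp hj)
  rw [sqrt_factorial]
  field_simp
  rw [sq_sqrt choose_pos.le]

theorem add_pow_div_sqrt_factorial_le {p x : ℝ} (hp : 0 ≤ p) (hx : 0 ≤ x) (n : ℕ) :
    (p + x) ^ n / √(n ! : ℝ) ≤ 2 ^ n * exp (x ^ 2 / 4) * sqrtExpSum (n + 1) p := by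
  rw [add_pow_div_sqrt_factorial, sqrtExpSum, mul_sum]
  refine sum_le_sum fun j _ ↦ ?_
  have choose_le : √(n.choose j : ℝ) ≤ √2 ^ n := by
    rw [sqrt_le_left (by positivity), pow_right_comm, sq_sqrt zero_le_two]
    exact_mod_cast Nat.choose_le_two_pow n j
  have pow_le : x ^ (n - j) / √((n - j)! : ℝ) ≤ √2 ^ n * exp (x ^ 2 / 4) :=
    calc x ^ (n - j) / √((n - j)! : ℝ) ≤ √2 ^ (n - j) * exp (x ^ 2 / (2 * 2)) :=
          pow_div_sqrt_factorial_le two_pos x (n - j)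
      _ ≤ √2 ^ n * exp (x ^ 2 / 4) := by
          norm_num only
          gcongr
          · exact one_le_sqrt.mpr one_le_two
          · exact n.sub_le j
  calc √(n.choose j : ℝ) * (p ^ j / √(j ! : ℝ)) * (x ^ (n - j) / √((n - j)! : ℝ))
      ≤ √2 ^ n * (p ^ j / √(j ! : ℝ)) * (√2 ^ n * exp (x ^ 2 / 4)) := by gcongr
    _ = (√2 * √2) ^ n * exp (x ^ 2 / 4) * (p ^ j / √(j ! : ℝ)) := by ring
    _ = 2 ^ n * exp (x ^ 2 / 4) * (p ^ j / √(j ! : ℝ)) := by rw [mul_self_sqrt zero_le_two]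

end TruncatedSeries

section Integrand

theorem log_add_le_log_add {s t : ℝ} (hs : 1 ≤ s) (ht : 0 ≤ t) : log (s + t) ≤ log s + t := by
  rw [log_le_iff_le_exp (by positivity), exp_add, exp_log (by positivity)]
  nlinarith [add_one_le_exp t]

theorem log_max_add_le {c t : ℝ} (hc : 1 ≤ c) (ht : 0 ≤ t) (s : ℝ) :
    log (max (s + t) c) ≤ log (max s c) + t :=
  calc log (max (s + t) c) ≤ log (max s c + t) := by
        apply log_le_log (by positivity)
        rw [← max_add_add_right]
        exact max_le_max le_rfl (le_add_of_nonneg_right ht)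
    _ ≤ log (max s c) + t := log_add_le_log_add (le_max_of_le_right hc) ht

theorem log_max_nonneg {c : ℝ} (hc : 1 ≤ c) (s : ℝ) : 0 ≤ log (max s c) :=
  log_nonneg (le_max_of_le_right hc)

theorem expSum_half_log_max_nonneg (n : ℕ) {c : ℝ} (hc : 1 ≤ c) (s : ℝ) :
    0 ≤ expSum n (log (max s c) / 2) :=
  expSum_nonneg n (div_nonneg (log_max_nonneg hc s) zero_le_two)

theorem gaussian_mul_pow_mul_expSum_le {p x a b : ℝ} (hp : 0 ≤ p) (hx : 0 ≤ x) (ha : 0 ≤ a)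
    (hb : 0 ≤ b) (hba : b ≤ a + x) (μ n : ℕ) :
    exp (-x ^ 2 / 2) * ((p + x) ^ μ / √(μ ! : ℝ)) * expSum n (b / 2) ≤
      2 ^ μ * sqrtExpSum (μ + 1) p * expSum n (a / 2) * exp 1 * exp (-(3 / 16) * x ^ 2) := by
  have expSum_le : expSum n (b / 2) ≤ expSum n (a / 2) * exp (x / 2) :=
    (expSum_le_expSum n (by positivity) (by linarith)).trans
      (expSum_add_le n (by positivity) (by positivity))
  have exponent_le : -x ^ 2 / 2 + x ^ 2 / 4 + x / 2 ≤ 1 + -(3 / 16) * x ^ 2 := by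
    linarith [sq_nonneg (x - 4)]
  have hA := sqrtExpSum_nonneg (μ + 1) hp
  have hB := expSum_nonneg n (div_nonneg ha zero_le_two)
  have hB' := expSum_nonneg n (div_nonneg hb zero_le_two)
  calc exp (-x ^ 2 / 2) * ((p + x) ^ μ / √(μ ! : ℝ)) * expSum n (b / 2)
      ≤ exp (-x ^ 2 / 2) * (2 ^ μ * exp (x ^ 2 / 4) * sqrtExpSum (μ + 1) p) *
          (expSum n (a / 2) * exp (x / 2)) := by
        gcongr
        exact add_pow_div_sqrt_factorial_le hp hx μ
    _ = 2 ^ μ * sqrtExpSum (μ + 1) p * expSum n (a / 2) *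
          exp (-x ^ 2 / 2 + x ^ 2 / 4 + x / 2) := by
        rw [exp_add, exp_add]
        ring
    _ ≤ 2 ^ μ * sqrtExpSum (μ + 1) p * expSum n (a / 2) * exp (1 + -(3 / 16) * x ^ 2) := by
        gcongr
    _ = _ := by rw [exp_add, ← mul_assoc]

/-- The integrand of the momentum integral as a function of the radius `r = |k|`, with the sum over
`λ < n` written as `expSum n` of half the logarithm, and with `c` in place of `κ / m`. -/
noncomputable def momentumIntegrand (Λ κ c P : ℝ) (μ n : ℕ) (r : ℝ) : ℝ :=
  exp (-r ^ 2 / (2 * Λ ^ 2)) * ((P + r) / Λ) ^ μ * expSum n (log (max ((P + r) / κ) c) / 2)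

variable {Λ κ c P r : ℝ}

theorem momentumIntegrand_nonneg (hΛ : 0 < Λ) (hc : 1 ≤ c) (hP : 0 ≤ P) (μ n : ℕ)
    (hr : 0 ≤ r) : 0 ≤ momentumIntegrand Λ κ c P μ n r :=
  mul_nonneg (by positivity) (expSum_half_log_max_nonneg n hc _)

theorem momentumIntegrand_div_sqrt_factorial_le (hΛ : 0 < Λ) (hκ : Λ ≤ κ) (hc : 1 ≤ c)
    (hP : 0 ≤ P) (μ n : ℕ) (hr : 0 ≤ r) :
    momentumIntegrand Λ κ c P μ n r / √(μ ! : ℝ) ≤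
      2 ^ μ * (sqrtExpSum (μ + 1) (P / Λ) * expSum n (log (max (P / κ) c) / 2)) * exp 1 *
        exp (-(3 / 16) * (r / Λ) ^ 2) := by
  have hκ_pos : 0 < κ := hΛ.trans_le hκ
  have log_le : log (max ((P + r) / κ) c) ≤ log (max (P / κ) c) + r / Λ := by
    rw [add_div]
    refine (log_max_add_le hc (by positivity) _).trans ?_
    gcongr
  calc momentumIntegrand Λ κ c P μ n r / √(μ ! : ℝ)
      = exp (-(r / Λ) ^ 2 / 2) * ((P / Λ + r / Λ) ^ μ / √(μ ! : ℝ)) *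
          expSum n (log (max ((P + r) / κ) c) / 2) := by
        rw [momentumIntegrand, ← add_div, show -r ^ 2 / (2 * Λ ^ 2) = -(r / Λ) ^ 2 / 2 by ring]
        ring
    _ ≤ _ := gaussian_mul_pow_mul_expSum_le (by positivity) (by positivity)
        (log_max_nonneg hc _) (log_max_nonneg hc _) log_le μ n
    _ = _ := by ring

end Integrand

theorem exp_one_mul_rpow_le_half {s : ℝ} (hs : 2 ≤ s) :
    exp 1 * (4 / (3 * π)) ^ s ≤ 1 / 2 := by
  have base_le_one : 4 / (3 * π) ≤ 1 := by
    rw [div_le_one (by positivity)]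
    linarith [pi_gt_three]
  calc exp 1 * (4 / (3 * π)) ^ s
      ≤ exp 1 * (4 / (3 * π)) ^ (2 : ℝ) := by
        gcongr ?_ * ?_
        exact rpow_le_rpow_of_exponent_ge (by positivity) base_le_one hs
    _ = 16 * exp 1 / (9 * π ^ 2) := by
        rw [rpow_two]
        ring
    _ ≤ 1 / 2 := by
        rw [div_le_iff₀ (by positivity)]
        nlinarith [pi_gt_d2, exp_one_lt_d9]

section MomentumIntegral

variable {E : Type*} [NormedAddCommGroup E] [InnerProductSpace ℝ E] [FiniteDimensional ℝ E]
  [MeasurableSpace E] [BorelSpace E]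

theorem integral_exp_neg_mul_norm_div_sq {b Λ : ℝ} (hb : 0 < b) (hΛ : 0 < Λ) :
    ∫ k : E, exp (-b * (‖k‖ / Λ) ^ 2) = (π * Λ ^ 2 / b) ^ (finrank ℝ E / 2 : ℝ) := by
  have rescale (k : E) : -b * (‖k‖ / Λ) ^ 2 = -(b / Λ ^ 2) * ‖k‖ ^ 2 := by ring
  simp only [rescale]
  rw [GaussianFourier.integral_rexp_neg_mul_sq_norm (by positivity), div_div_eq_mul_div]

theorem integrable_exp_neg_mul_norm_div_sq {b Λ : ℝ} (hb : 0 < b) (hΛ : 0 < Λ) :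
    Integrable fun k : E ↦ exp (-b * (‖k‖ / Λ) ^ 2) :=
  .of_integral_ne_zero <| by
    rw [integral_exp_neg_mul_norm_div_sq hb hΛ]
    positivity

theorem normalized_integral_exp_neg_mul_norm_div_sq {b Λ : ℝ} (hb : 0 < b) (hΛ : 0 < Λ) :
    1 / ((2 * π) ^ finrank ℝ E * Λ ^ finrank ℝ E) * ∫ k : E, exp (-b * (‖k‖ / Λ) ^ 2) =
      (1 / (4 * π * b)) ^ (finrank ℝ E / 2 : ℝ) := by
  have normalization : (2 * π) ^ finrank ℝ E * Λ ^ finrank ℝ E =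
      ((2 * π * Λ) ^ 2) ^ (finrank ℝ E / 2 : ℝ) := by
    rw [← mul_pow, ← rpow_natCast _ 2, ← rpow_mul (by positivity), ← rpow_natCast]
    congr 1
    push_cast
    ring
  rw [normalization, integral_exp_neg_mul_norm_div_sq hb hΛ, one_div_mul_eq_div,
    ← div_rpow (by positivity) (by positivity)]
  congr 1
  field_simp
  norm_num

theorem normalized_integral_momentumIntegrand_le (hE : 4 ≤ finrank ℝ E) {Λ κ c P : ℝ}
    (hΛ : 0 < Λ) (hκ : Λ ≤ κ) (hc : 1 ≤ c) (hP : 0 ≤ P) (μ n : ℕ) :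
    1 / √(μ ! : ℝ) * (1 / ((2 * π) ^ finrank ℝ E * Λ ^ finrank ℝ E) *
      ∫ k : E, momentumIntegrand Λ κ c P μ n ‖k‖) ≤
      2 ^ μ * (sqrtExpSum (μ + 1) (P / Λ) * expSum n (log (max (P / κ) c) / 2) / 2) := by
  set M := sqrtExpSum (μ + 1) (P / Λ) * expSum n (log (max (P / κ) c) / 2)
  have hM : 0 ≤ M := mul_nonneg (sqrtExpSum_nonneg _ (by positivity))
    (expSum_half_log_max_nonneg n hc _)
  calc _ = 1 / ((2 * π) ^ finrank ℝ E * Λ ^ finrank ℝ E) *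
        ∫ k : E, momentumIntegrand Λ κ c P μ n ‖k‖ / √(μ ! : ℝ) := by
        rw [integral_div]
        ring
    _ ≤ 1 / ((2 * π) ^ finrank ℝ E * Λ ^ finrank ℝ E) *
        ∫ k : E, 2 ^ μ * M * exp 1 * exp (-(3 / 16) * (‖k‖ / Λ) ^ 2) := by
        gcongr ?_ * ?_
        exact integral_mono_of_nonneg
          (.of_forall fun k ↦ div_nonneg
            (momentumIntegrand_nonneg hΛ hc hP μ n (norm_nonneg k)) (sqrt_nonneg _))
          ((integrable_exp_neg_mul_norm_div_sq (by norm_num) hΛ).const_mul _)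
          (.of_forall fun k ↦ momentumIntegrand_div_sqrt_factorial_le hΛ hκ hc hP μ n
            (norm_nonneg k))
    _ = 2 ^ μ * M * (exp 1 * (4 / (3 * π)) ^ (finrank ℝ E / 2 : ℝ)) := by
        rw [show 4 / (3 * π) = 1 / (4 * π * (3 / 16)) by field_simp; norm_num, integral_const_mul,
          ← normalized_integral_exp_neg_mul_norm_div_sq (E := E) (by norm_num) hΛ]
        ring
    _ ≤ 2 ^ μ * M * (1 / 2) := by
        have half_dim : (2 : ℝ) ≤ finrank ℝ E / 2 := by
          rw [le_div_iff₀ two_pos]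
          norm_num
          exact hE
        gcongr
        exact exp_one_mul_rpow_le_half half_dim
    _ = 2 ^ μ * (M / 2) := by ring

theorem stmt_8_general {D : ℕ} (hE : finrank ℝ E = D) (hD : 4 ≤ D) (d L : ℕ) {Λ κ c P : ℝ}
    (hΛ : 0 < Λ) (hκ : Λ ≤ κ) (hc : 1 ≤ c) (hP : 0 ≤ P) :
    ∑ μ ∈ range (d + 1), (1 / √(μ ! : ℝ)) *
      ((1 / ((2 * π) ^ D * Λ ^ D)) *
        ∫ k : E, exp (-‖k‖ ^ 2 / (2 * Λ ^ 2)) * ((P + ‖k‖) / Λ) ^ μ *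
          ∑ l ∈ range (L + 1), log (max ((P + ‖k‖) / κ) c) ^ l / (2 ^ l * (l ! : ℝ))) ≤
      2 ^ d * ∑ μ ∈ range (d + 1), (1 / √(μ ! : ℝ)) * (P / Λ) ^ μ *
        ∑ l ∈ range (L + 1), log (max (P / κ) c) ^ l / (2 ^ l * (l ! : ℝ)) := by
  subst hE
  simp only [← expSum_div_two]
  set A := sqrtExpSum (d + 1) (P / Λ) with hA
  set B := expSum (L + 1) (log (max (P / κ) c) / 2)
  have hp : 0 ≤ P / Λ := by positivity
  have hA0 : 0 ≤ A := sqrtExpSum_nonneg _ hp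
  have hB0 : 0 ≤ B := expSum_half_log_max_nonneg _ hc _
  have geom_sum_le : ∑ μ ∈ range (d + 1), (2 : ℝ) ^ μ ≤ 2 ^ (d + 1) := by
    exact_mod_cast (Nat.geomSum_lt le_rfl fun _ ↦ mem_range.mp).le
  calc _ ≤ ∑ μ ∈ range (d + 1), 2 ^ μ * (A * B / 2) := by
        refine sum_le_sum fun μ hμ ↦
          (normalized_integral_momentumIntegrand_le hD hΛ hκ hc hP μ (L + 1)).trans ?_
        gcongr
        exact sqrtExpSum_mono hp (mem_range.mp hμ)
    _ = (∑ μ ∈ range (d + 1), 2 ^ μ) * (A * B / 2) := (sum_mul ..).symm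
    _ ≤ 2 ^ (d + 1) * (A * B / 2) := by gcongr
    _ = 2 ^ d * (A * B) := by ring
    _ = _ := by simp only [hA, sqrtExpSum, sum_mul, one_div_mul_eq_div]

end MomentumIntegral

/-- The momentum-space Gaussian integral estimate used for the first term of the flow
equation: integrating against the Gaussian `e^{-|k|²/(2Λ²)}` (with the normalization
`∫_k = ∫ d⁴k/(2π)⁴` and an extra factor `Λ⁻⁴`) is bounded by `2^d` times the integrand
with `k = 0`, up to the additive `√λ!` terms. -/
theorem stmt_8 (d L : ℕ) (Λ m P : ℝ) (hΛ : 0 < Λ) (hm : 0 < m) (hP : 0 ≤ P) :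
    ∑ μ ∈ Finset.range (d + 1), (1 / Real.sqrt (Nat.factorial μ)) *
      ((1 / ((2 * Real.pi) ^ 4 * Λ ^ 4)) *
        ∫ k : EuclideanSpace ℝ (Fin 4),
          Real.exp (-‖k‖ ^ 2 / (2 * Λ ^ 2)) * ((P + ‖k‖) / Λ) ^ μ *
            ∑ l ∈ Finset.range (L + 1),
              Real.log (max ((P + ‖k‖) / max Λ m) (max Λ m / m)) ^ l /
                (2 ^ l * (Nat.factorial l : ℝ))) ≤
      2 ^ d * ∑ μ ∈ Finset.range (d + 1), (1 / Real.sqrt (Nat.factorial μ)) * (P / Λ) ^ μ *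
        ∑ l ∈ Finset.range (L + 1),
          (Real.log (max (P / max Λ m) (max Λ m / m)) ^ l + Real.sqrt (Nat.factorial l)) /
            (2 ^ l * (Nat.factorial l : ℝ)) := by
  refine (stmt_8_general (E := EuclideanSpace ℝ (Fin 4)) finrank_euclideanSpace_fin le_rfl d L hΛ
    (le_max_left Λ m) ((one_le_div hm).mpr (le_max_right Λ m)) hP).trans ?_
  gcongr
  exact le_add_of_nonneg_right (sqrt_nonneg _)
end
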